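/- The representation W is irreducible — that is, the only invariant subspaces of W are {0} and W — if and only if m13 + m33 + 1 ≠ 0 and m23 + m33 ≠ 0 (equivalently, since q > 0 and q ≠ 1, if and only if [m13+m33+1]·[m23+m33] ≠ 0). Such irreducible representations are the typical representations of U_q[gl(2/1)]. -/

import Mathlib

/-! If `m13 + m33 + 1 = 0`, the formulas show that `V_2 ⊕ V_3` is invariant; if `m23 + m33 = 0`,
`V_1 ⊕ V_3` is. Both are nonzero (they contain `V_3`) and proper (they miss `V_0`).

Conversely, suppose both numbers are nonzero and let `U ≠ 0` be invariant. An element of minimal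
support among the nonzero elements of `U` is a common eigenvector of `E11` and `E33`, so it is
a multiple of some `v(k, x)` or a combination of `v(1, x)` and `v(2, x)`
(`exists_weight_vector`). In the latter case, if the coefficient of `v(1, x)` is nonzero, powers
of `E12` turn it into a nonzero multiple of `v(1, m13)` (`one_mem_of_combination`). So `U` contains
a basis vector, and then its whole sector by `sector_mem`. Evaluating `E23` and `E32` at extreme
values of `m11`, where the images reduce to one term, gives `V_3 → V_1 → V_0`, `V_2 → V_0` (this uses
the typicality condition), and `V_0` generates `W` under `E32` unconditionally (`eq_top_of_zero`). -/


noncomputable section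

/-- The `q`-number `[x] = (q^x - q^(-x))/(q - q⁻¹)`. -/
def qn (q : ℝ) (x : ℤ) : ℝ := (q ^ x - q ^ (-x)) / (q - q⁻¹)

/-- The triple `(m12, m22, m32)` attached to the sector `k ∈ {0,1,2,3}`. -/
def trip (m13 m23 m33 : ℤ) : Fin 4 → ℤ × ℤ × ℤ
  | 0 => (m13, m23, m33)
  | 1 => (m13, m23 - 1, m33 + 1)
  | 2 => (m13 - 1, m23, m33 + 1)
  | 3 => (m13 - 1, m23 - 1, m33 + 2)

def M12 (m13 m23 m33 : ℤ) (k : Fin 4) : ℤ := (trip m13 m23 m33 k).1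
def M22 (m13 m23 m33 : ℤ) (k : Fin 4) : ℤ := (trip m13 m23 m33 k).2.1
def M32 (m13 m23 m33 : ℤ) (k : Fin 4) : ℤ := (trip m13 m23 m33 k).2.2

/-- `m11` is in the allowed range `m22 ≤ m11 ≤ m12` of the sector `k`. -/
def InR (m13 m23 m33 : ℤ) (k : Fin 4) (x : ℤ) : Prop :=
  M22 m13 m23 m33 k ≤ x ∧ x ≤ M12 m13 m23 m33 k

instance (m13 m23 m33 : ℤ) (k : Fin 4) (x : ℤ) : Decidable (InR m13 m23 m33 k x) :=
  instDecidableAnd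

/-- The index set of the basis `v(k, m11)` of `W`. -/
abbrev Idx (m13 m23 m33 : ℤ) : Type :=
  {p : Fin 4 × ℤ // InR m13 m23 m33 p.1 p.2}

/-- The module `W = W^q([m13,m23,m33])`, realized as the free complex vector
space on the basis `v(k, m11)`, `k ∈ {0,1,2,3}`, `m22 ≤ m11 ≤ m12`. -/
abbrev Wsp (m13 m23 m33 : ℤ) : Type := Idx m13 m23 m33 →₀ ℂ

/-- The basis vector `v(k, m11)` (zero if `m11` is out of range). -/
def bv (m13 m23 m33 : ℤ) (k : Fin 4) (x : ℤ) : Wsp m13 m23 m33 :=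
  if h : InR m13 m23 m33 k x then Finsupp.single ⟨(k, x), h⟩ 1 else 0

/-- The sector `V_k`, the span of the `v(k, ·)`. -/
def Vk (m13 m23 m33 : ℤ) (k : Fin 4) : Submodule ℂ (Wsp m13 m23 m33) :=
  Submodule.span ℂ (Set.range (bv m13 m23 m33 k))

/-- The Gel'fand--Zetlin realization of the induced `U_q[gl(2/1)]`-module
`W^q([m13,m23,m33])`: seven linear operators acting on the basis `v(k, m11)`
by the stated formulas (terms with `m11` out of range being `0`). -/
structure GZ (q : ℝ) (m13 m23 m33 : ℤ) where
  E11 : Wsp m13 m23 m33 →ₗ[ℂ] Wsp m13 m23 m33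
  E22 : Wsp m13 m23 m33 →ₗ[ℂ] Wsp m13 m23 m33
  E33 : Wsp m13 m23 m33 →ₗ[ℂ] Wsp m13 m23 m33
  E12 : Wsp m13 m23 m33 →ₗ[ℂ] Wsp m13 m23 m33
  E21 : Wsp m13 m23 m33 →ₗ[ℂ] Wsp m13 m23 m33
  E23 : Wsp m13 m23 m33 →ₗ[ℂ] Wsp m13 m23 m33
  E32 : Wsp m13 m23 m33 →ₗ[ℂ] Wsp m13 m23 m33
  hE11 : ∀ (k : Fin 4) (x : ℤ), InR m13 m23 m33 k x →
    E11 (bv m13 m23 m33 k x) = (x : ℂ) • bv m13 m23 m33 k x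
  hE22 : ∀ (k : Fin 4) (x : ℤ), InR m13 m23 m33 k x →
    E22 (bv m13 m23 m33 k x) =
      ((M12 m13 m23 m33 k + M22 m13 m23 m33 k - x : ℤ) : ℂ) • bv m13 m23 m33 k x
  hE33 : ∀ (k : Fin 4) (x : ℤ), InR m13 m23 m33 k x →
    E33 (bv m13 m23 m33 k x) = ((M32 m13 m23 m33 k : ℤ) : ℂ) • bv m13 m23 m33 k x
  hE12 : ∀ (k : Fin 4) (x : ℤ), InR m13 m23 m33 k x →
    E12 (bv m13 m23 m33 k x) =
      ((Real.sqrt (qn q (M12 m13 m23 m33 k - x) * qn q (x - M22 m13 m23 m33 k + 1)) : ℝ) : ℂ) •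
        bv m13 m23 m33 k (x + 1)
  hE21 : ∀ (k : Fin 4) (x : ℤ), InR m13 m23 m33 k x →
    E21 (bv m13 m23 m33 k x) =
      ((Real.sqrt (qn q (M12 m13 m23 m33 k - x + 1) * qn q (x - M22 m13 m23 m33 k)) : ℝ) : ℂ) •
        bv m13 m23 m33 k (x - 1)
  hE23₀ : ∀ x : ℤ, InR m13 m23 m33 0 x → E23 (bv m13 m23 m33 0 x) = 0
  hE23₁ : ∀ x : ℤ, InR m13 m23 m33 1 x →
    E23 (bv m13 m23 m33 1 x) =
      ((Real.sqrt (qn q (x - m23 + 1) / qn q (m13 - m23 + 1)) * qn q (m23 + m33) : ℝ) : ℂ) •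
        bv m13 m23 m33 0 x
  hE23₂ : ∀ x : ℤ, InR m13 m23 m33 2 x →
    E23 (bv m13 m23 m33 2 x) =
      ((Real.sqrt (qn q (m13 - x) / qn q (m13 - m23)) * qn q (m13 + m33 + 1) : ℝ) : ℂ) •
        bv m13 m23 m33 0 x
  hE23₃ : ∀ x : ℤ, InR m13 m23 m33 3 x →
    E23 (bv m13 m23 m33 3 x) =
      ((q⁻¹ * Real.sqrt (qn q (m13 - x) / qn q (m13 - m23 + 1)) * qn q (m13 + m33 + 1) : ℝ) : ℂ) •
          bv m13 m23 m33 1 x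
        - ((q⁻¹ * Real.sqrt (qn q (x - m23 + 1) * qn q (m13 - m23)) *
            (qn q (m23 + m33) / qn q (m13 - m23 + 1)) : ℝ) : ℂ) • bv m13 m23 m33 2 x
  hE32₀ : ∀ x : ℤ, InR m13 m23 m33 0 x →
    E32 (bv m13 m23 m33 0 x) =
      ((Real.sqrt (qn q (x - m23 + 1) / qn q (m13 - m23 + 1)) : ℝ) : ℂ) • bv m13 m23 m33 1 x
        + ((Real.sqrt (qn q (m13 - x) * qn q (m13 - m23)) / qn q (m13 - m23 + 1) : ℝ) : ℂ) •
            bv m13 m23 m33 2 x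
  hE32₁ : ∀ x : ℤ, InR m13 m23 m33 1 x →
    E32 (bv m13 m23 m33 1 x) =
      ((q * Real.sqrt (qn q (m13 - x) / qn q (m13 - m23 + 1)) : ℝ) : ℂ) • bv m13 m23 m33 3 x
  hE32₂ : ∀ x : ℤ, InR m13 m23 m33 2 x →
    E32 (bv m13 m23 m33 2 x) =
      -(((q * Real.sqrt (qn q (x - m23 + 1) / qn q (m13 - m23)) : ℝ) : ℂ) • bv m13 m23 m33 3 x)
  hE32₃ : ∀ x : ℤ, InR m13 m23 m33 3 x → E32 (bv m13 m23 m33 3 x) = 0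

/-- A subspace `U` of `W` is invariant if it is stable under all seven
operators `E11, E22, E33, E12, E21, E23, E32`. -/
def Invariant (q : ℝ) (m13 m23 m33 : ℤ) (R : GZ q m13 m23 m33)
    (U : Submodule ℂ (Wsp m13 m23 m33)) : Prop :=
  ∀ E ∈ ({R.E11, R.E22, R.E33, R.E12, R.E21, R.E23, R.E32} :
      Set (Wsp m13 m23 m33 →ₗ[ℂ] Wsp m13 m23 m33)),
    ∀ x ∈ U, E x ∈ U

/-! ### The `q`-numbers -/

section QNumbers

variable {q : ℝ}

lemma qn_zero : qn q 0 = 0 := by simp [qn]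

lemma qn_pos (hq : 0 < q) (hq1 : q ≠ 1) {x : ℤ} (hx : 0 < x) : 0 < qn q x := by
  unfold qn
  -- Numerator and denominator are `q ^ x - q ^ (-x)` at `x` and at `1`; both have the sign of `q - 1`.
  rw [← zpow_neg_one]
  rcases lt_or_gt_of_ne hq1 with h | h
  · have h1 := zpow_lt_zpow_right_of_lt_one₀ hq h (show -x < x by omega)
    have h2 := zpow_lt_zpow_right_of_lt_one₀ hq h (show (-1 : ℤ) < 1 by omega)
    rw [zpow_one] at h2
    exact div_pos_of_neg_of_neg (by linarith) (by linarith)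
  · have h1 := zpow_lt_zpow_right₀ h (show -x < x by omega)
    have h2 := zpow_lt_zpow_right₀ h (show (-1 : ℤ) < 1 by omega)
    rw [zpow_one] at h2
    exact div_pos (by linarith) (by linarith)

lemma qn_neg (x : ℤ) : qn q (-x) = -qn q x := by
  unfold qn
  rw [neg_neg, ← neg_div, neg_sub]

lemma qn_ne_zero (hq : 0 < q) (hq1 : q ≠ 1) {x : ℤ} (hx : x ≠ 0) : qn q x ≠ 0 := by
  rcases lt_or_gt_of_ne hx with h | h
  · have := qn_pos hq hq1 (show 0 < -x by omega)
    rw [qn_neg] at this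
    linarith
  · exact (qn_pos hq hq1 h).ne'

end QNumbers

section Module

variable {q : ℝ} {m13 m23 m33 : ℤ}

/-! ### The basis vectors -/

lemma bv_of_inR {k : Fin 4} {x : ℤ} (h : InR m13 m23 m33 k x) :
    bv m13 m23 m33 k x = Finsupp.single ⟨(k, x), h⟩ 1 := by
  simp [bv, h]

lemma bv_of_not_inR {k : Fin 4} {x : ℤ} (h : ¬ InR m13 m23 m33 k x) :
    bv m13 m23 m33 k x = 0 := by
  simp [bv, h]

lemma inR_zero {x : ℤ} : InR m13 m23 m33 0 x ↔ m23 ≤ x ∧ x ≤ m13 := Iff.rfl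
lemma inR_one {x : ℤ} : InR m13 m23 m33 1 x ↔ m23 - 1 ≤ x ∧ x ≤ m13 := Iff.rfl
lemma inR_two {x : ℤ} : InR m13 m23 m33 2 x ↔ m23 ≤ x ∧ x ≤ m13 - 1 := Iff.rfl
lemma inR_three {x : ℤ} : InR m13 m23 m33 3 x ↔ m23 - 1 ≤ x ∧ x ≤ m13 - 1 := Iff.rfl

lemma diag_apply {T : Wsp m13 m23 m33 →ₗ[ℂ] Wsp m13 m23 m33} {t : Fin 4 → ℤ → ℂ}
    (hT : ∀ k x, InR m13 m23 m33 k x → T (bv m13 m23 m33 k x) = t k x • bv m13 m23 m33 k x)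
    (u : Wsp m13 m23 m33) (i : Idx m13 m23 m33) : T u i = t i.1.1 i.1.2 * u i := by
  induction u using Finsupp.induction_linear with
  | zero => simp
  | add f g hf hg => simp [hf, hg, mul_add]
  | single j c =>
    obtain ⟨⟨k, x⟩, h⟩ := j
    have e : (Finsupp.single ⟨(k, x), h⟩ c : Wsp m13 m23 m33) = c • bv m13 m23 m33 k x := by
      simp [bv_of_inR h]
    rw [e, map_smul, hT k x h, bv_of_inR h]
    by_cases hi : (⟨(k, x), h⟩ : Idx m13 m23 m33) = i
    · subst hi; simp; ring
    · simp [Finsupp.single_eq_of_ne' hi]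

/-! ### The submodules spanned by sectors -/

/-- The span of the sectors `V_k`, `k ∈ K`. -/
def sectors (m13 m23 m33 : ℤ) (K : Set (Fin 4)) : Submodule ℂ (Wsp m13 m23 m33) :=
  Finsupp.supported ℂ ℂ {i | i.1.1 ∈ K}

lemma bv_mem_sectors {K : Set (Fin 4)} {k : Fin 4} (hk : k ∈ K) (x : ℤ) :
    bv m13 m23 m33 k x ∈ sectors m13 m23 m33 K := by
  by_cases h : InR m13 m23 m33 k x
  · rw [bv_of_inR h]
    exact Finsupp.single_mem_supported ℂ _ hk
  · rw [bv_of_not_inR h]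
    exact zero_mem _

lemma map_mem_sectors {K : Set (Fin 4)} {T : Wsp m13 m23 m33 →ₗ[ℂ] Wsp m13 m23 m33}
    (hT : ∀ k ∈ K, ∀ x, InR m13 m23 m33 k x →
      T (bv m13 m23 m33 k x) ∈ sectors m13 m23 m33 K)
    {u : Wsp m13 m23 m33} (hu : u ∈ sectors m13 m23 m33 K) : T u ∈ sectors m13 m23 m33 K := by
  unfold sectors at hu
  rw [Finsupp.supported_eq_span_single] at hu
  induction hu using Submodule.span_induction with
  | mem v hv =>
    obtain ⟨⟨⟨k, x⟩, h⟩, hi, rfl⟩ := hv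
    have := hT k hi x h
    rwa [bv_of_inR h] at this
  | zero => simp
  | add a b _ _ ha hb => rw [map_add]; exact add_mem ha hb
  | smul c a _ ha => rw [map_smul]; exact Submodule.smul_mem _ _ ha

/-- The five even operators preserve each sector, so only the odd ones need to be tested. -/
lemma invariant_sectors (R : GZ q m13 m23 m33) {K : Set (Fin 4)}
    (h23 : ∀ k ∈ K, ∀ x, InR m13 m23 m33 k x →
      R.E23 (bv m13 m23 m33 k x) ∈ sectors m13 m23 m33 K)
    (h32 : ∀ k ∈ K, ∀ x, InR m13 m23 m33 k x →
      R.E32 (bv m13 m23 m33 k x) ∈ sectors m13 m23 m33 K) :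
    Invariant q m13 m23 m33 R (sectors m13 m23 m33 K) := by
  intro E hE u hu
  simp only [Set.mem_insert_iff, Set.mem_singleton_iff] at hE
  refine map_mem_sectors (fun k hk x hx => ?_) hu
  rcases hE with rfl | rfl | rfl | rfl | rfl | rfl | rfl
  · rw [R.hE11 k x hx]; exact Submodule.smul_mem _ _ (bv_mem_sectors hk _)
  · rw [R.hE22 k x hx]; exact Submodule.smul_mem _ _ (bv_mem_sectors hk _)
  · rw [R.hE33 k x hx]; exact Submodule.smul_mem _ _ (bv_mem_sectors hk _)
  · rw [R.hE12 k x hx]; exact Submodule.smul_mem _ _ (bv_mem_sectors hk _)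
  · rw [R.hE21 k x hx]; exact Submodule.smul_mem _ _ (bv_mem_sectors hk _)
  · exact h23 k hk x hx
  · exact h32 k hk x hx

lemma sectors_ne_bot (hm : m23 ≤ m13) {K : Set (Fin 4)} (h3 : 3 ∈ K) :
    sectors m13 m23 m33 K ≠ ⊥ := by
  intro h
  have hr : InR m13 m23 m33 3 (m23 - 1) := inR_three.2 ⟨le_rfl, by omega⟩
  have := bv_mem_sectors (m13 := m13) (m23 := m23) (m33 := m33) h3 (m23 - 1)
  rw [h, Submodule.mem_bot, bv_of_inR hr] at this
  simp at this

lemma sectors_ne_top (hm : m23 ≤ m13) {K : Set (Fin 4)} (h0 : 0 ∉ K) :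
    sectors m13 m23 m33 K ≠ ⊤ := by
  intro h
  have hr : InR m13 m23 m33 0 m13 := inR_zero.2 ⟨hm, le_rfl⟩
  have : bv m13 m23 m33 0 m13 ∈ sectors m13 m23 m33 K := by rw [h]; trivial
  rw [bv_of_inR hr, sectors, Finsupp.mem_supported] at this
  exact h0 (this (by simp : (⟨(0, m13), hr⟩ : Idx m13 m23 m33) ∈ _))

lemma invariant_of_first (R : GZ q m13 m23 m33) (h : m13 + m33 + 1 = 0) :
    Invariant q m13 m23 m33 R (sectors m13 m23 m33 {2, 3}) := by
  refine invariant_sectors R ?_ ?_ <;> rintro k (rfl | rfl) x hx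
  · rw [R.hE23₂ x hx, h, qn_zero]; simp
  · rw [R.hE23₃ x hx, h, qn_zero]
    simpa using Submodule.smul_mem _ _ (bv_mem_sectors (by simp) _)
  · rw [R.hE32₂ x hx]
    exact neg_mem (Submodule.smul_mem _ _ (bv_mem_sectors (by simp) _))
  · rw [R.hE32₃ x hx]; exact zero_mem _

lemma invariant_of_second (R : GZ q m13 m23 m33) (h : m23 + m33 = 0) :
    Invariant q m13 m23 m33 R (sectors m13 m23 m33 {1, 3}) := by
  refine invariant_sectors R ?_ ?_ <;> rintro k (rfl | rfl) x hx
  · rw [R.hE23₁ x hx, h, qn_zero]; simp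
  · rw [R.hE23₃ x hx, h, qn_zero]
    simpa using Submodule.smul_mem _ _ (bv_mem_sectors (by simp) _)
  · rw [R.hE32₁ x hx]
    exact Submodule.smul_mem _ _ (bv_mem_sectors (by simp) _)
  · rw [R.hE32₃ x hx]; exact zero_mem _

/-! ### Propagation inside an invariant subspace -/

variable {R : GZ q m13 m23 m33} {U : Submodule ℂ (Wsp m13 m23 m33)}

lemma E12_coeff_pos (hq : 0 < q) (hq1 : q ≠ 1) {k : Fin 4} {x : ℤ}
    (hx : InR m13 m23 m33 k x) (hx' : InR m13 m23 m33 k (x + 1)) :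
    0 < √(qn q (M12 m13 m23 m33 k - x) * qn q (x - M22 m13 m23 m33 k + 1)) := by
  obtain ⟨h1, h2⟩ := hx
  obtain ⟨h3, h4⟩ := hx'
  exact Real.sqrt_pos.2 (mul_pos (qn_pos hq hq1 (by omega)) (qn_pos hq hq1 (by omega)))

lemma E21_coeff_pos (hq : 0 < q) (hq1 : q ≠ 1) {k : Fin 4} {x : ℤ}
    (hx : InR m13 m23 m33 k x) (hx' : InR m13 m23 m33 k (x - 1)) :
    0 < √(qn q (M12 m13 m23 m33 k - x + 1) * qn q (x - M22 m13 m23 m33 k)) := by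
  obtain ⟨h1, h2⟩ := hx
  obtain ⟨h3, h4⟩ := hx'
  exact Real.sqrt_pos.2 (mul_pos (qn_pos hq hq1 (by omega)) (qn_pos hq hq1 (by omega)))

lemma mem_of_ofReal_smul_mem {c : ℝ} (hc : c ≠ 0) {v : Wsp m13 m23 m33}
    (h : (c : ℂ) • v ∈ U) : v ∈ U :=
  (Submodule.smul_mem_iff U (Complex.ofReal_ne_zero.2 hc)).1 h

/-- Each sector is irreducible under `E12` and `E21`: one of its basis vectors generates all. -/
lemma sector_mem (hq : 0 < q) (hq1 : q ≠ 1) (hU : Invariant q m13 m23 m33 R U)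
    {k : Fin 4} {x : ℤ} (hx : InR m13 m23 m33 k x) (h : bv m13 m23 m33 k x ∈ U) (y : ℤ) :
    bv m13 m23 m33 k y ∈ U := by
  by_cases hy : InR m13 m23 m33 k y
  swap
  · rw [bv_of_not_inR hy]; exact zero_mem _
  rcases le_total x y with hxy | hxy
  · induction y, hxy using Int.leInduction with
    | base => exact h
    | succ z hz ih =>
      have hz' : InR m13 m23 m33 k z := ⟨hx.1.trans hz, by have := hy.2; omega⟩
      have := hU R.E12 (by simp) _ (ih hz')
      rw [R.hE12 k z hz'] at this
      exact mem_of_ofReal_smul_mem (E12_coeff_pos hq hq1 hz' hy).ne' this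
  · induction y, hxy using Int.leInductionDown with
    | base => exact h
    | pred z hz ih =>
      have hz' : InR m13 m23 m33 k z := ⟨by have := hy.1; omega, hz.trans hx.2⟩
      have := hU R.E21 (by simp) _ (ih hz')
      rw [R.hE21 k z hz'] at this
      exact mem_of_ofReal_smul_mem (E21_coeff_pos hq hq1 hz' hy).ne' this

lemma eq_top_of_forall_bv (h : ∀ k x, bv m13 m23 m33 k x ∈ U) : U = ⊤ := by
  rw [eq_top_iff]
  rintro u -
  induction u using Finsupp.induction_linear with
  | zero => exact zero_mem _
  | add f g hf hg => exact add_mem hf hg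
  | single j c =>
    obtain ⟨⟨k, x⟩, hx⟩ := j
    have := U.smul_mem c (h k x)
    rw [bv_of_inR hx] at this
    simpa using this

/-- `V_0` generates `W`: up to nonzero factors, `E32` sends `v(0, m13)` to `v(1, m13)`, then
`v(1, m23 - 1)` to `v(3, m23 - 1)`, and `v(0, m23)` to `v(2, m23)` modulo `V_1` when `V_2 ≠ 0`. -/
lemma eq_top_of_zero (hq : 0 < q) (hq1 : q ≠ 1) (hm : m23 ≤ m13)
    (hU : Invariant q m13 m23 m33 R U)
    {x : ℤ} (hx : InR m13 m23 m33 0 x) (h : bv m13 m23 m33 0 x ∈ U) : U = ⊤ := by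
  have hn : 0 < qn q (m13 - m23 + 1) := qn_pos hq hq1 (by omega)
  have h0 := sector_mem hq hq1 hU hx h
  have h1 : ∀ y, bv m13 m23 m33 1 y ∈ U := by
    have := hU R.E32 (by simp) _ (h0 m13)
    rw [R.hE32₀ _ (inR_zero.2 ⟨hm, le_rfl⟩), div_self hn.ne',
      bv_of_not_inR (k := 2) (fun h => by have := (inR_two.1 h).2; omega)] at this
    exact sector_mem hq hq1 hU (x := m13) (inR_one.2 ⟨by omega, le_rfl⟩) (by simpa using this)
  have h3 : ∀ y, bv m13 m23 m33 3 y ∈ U := by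
    have := hU R.E32 (by simp) _ (h1 (m23 - 1))
    rw [R.hE32₁ _ (inR_one.2 ⟨le_rfl, by omega⟩)] at this
    refine sector_mem hq hq1 hU (x := m23 - 1) (inR_three.2 ⟨le_rfl, by omega⟩)
      (mem_of_ofReal_smul_mem ?_ this)
    exact (mul_pos hq (Real.sqrt_pos.2 (div_pos (qn_pos hq hq1 (by omega)) hn))).ne'
  have h2 : ∀ y, bv m13 m23 m33 2 y ∈ U := by
    intro y
    rcases hm.eq_or_lt with e | hlt
    · rw [bv_of_not_inR (fun h => by have := inR_two.1 h; omega)]; exact zero_mem _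
    have := hU R.E32 (by simp) _ (h0 m23)
    rw [R.hE32₀ _ (inR_zero.2 ⟨le_rfl, hm⟩),
      Submodule.add_mem_iff_right _ (Submodule.smul_mem _ _ (h1 _))] at this
    refine sector_mem hq hq1 hU (x := m23) (inR_two.2 ⟨le_rfl, by omega⟩)
      (mem_of_ofReal_smul_mem ?_ this) y
    have hp : 0 < qn q (m13 - m23) := qn_pos hq hq1 (by omega)
    exact (div_pos (Real.sqrt_pos.2 (mul_pos hp hp)) hn).ne'
  refine eq_top_of_forall_bv fun k y => ?_
  fin_cases k
  exacts [h0 y, h1 y, h2 y, h3 y]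

lemma eq_top_of_one (hq : 0 < q) (hq1 : q ≠ 1) (hm : m23 ≤ m13) (hb : m23 + m33 ≠ 0)
    (hU : Invariant q m13 m23 m33 R U)
    {x : ℤ} (hx : InR m13 m23 m33 1 x) (h : bv m13 m23 m33 1 x ∈ U) : U = ⊤ := by
  have hn : 0 < qn q (m13 - m23 + 1) := qn_pos hq hq1 (by omega)
  have := hU R.E23 (by simp) _ (sector_mem hq hq1 hU hx h m13)
  rw [R.hE23₁ _ (inR_one.2 ⟨by omega, le_rfl⟩), div_self hn.ne'] at this
  exact eq_top_of_zero hq hq1 hm hU (x := m13) (inR_zero.2 ⟨hm, le_rfl⟩)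
    (mem_of_ofReal_smul_mem (by simpa using qn_ne_zero hq hq1 hb) this)

lemma eq_top_of_two (hq : 0 < q) (hq1 : q ≠ 1) (hm : m23 ≤ m13) (ha : m13 + m33 + 1 ≠ 0)
    (hU : Invariant q m13 m23 m33 R U)
    {x : ℤ} (hx : InR m13 m23 m33 2 x) (h : bv m13 m23 m33 2 x ∈ U) : U = ⊤ := by
  have hlt : m23 < m13 := by have := inR_two.1 hx; omega
  have hn : 0 < qn q (m13 - m23) := qn_pos hq hq1 (by omega)
  have := hU R.E23 (by simp) _ (sector_mem hq hq1 hU hx h m23)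
  rw [R.hE23₂ _ (inR_two.2 ⟨le_rfl, by omega⟩), div_self hn.ne'] at this
  exact eq_top_of_zero hq hq1 hm hU (x := m23) (inR_zero.2 ⟨le_rfl, hm⟩)
    (mem_of_ofReal_smul_mem (by simpa using qn_ne_zero hq hq1 ha) this)

lemma eq_top_of_three (hq : 0 < q) (hq1 : q ≠ 1) (hm : m23 ≤ m13) (ha : m13 + m33 + 1 ≠ 0)
    (hb : m23 + m33 ≠ 0) (hU : Invariant q m13 m23 m33 R U)
    {x : ℤ} (hx : InR m13 m23 m33 3 x) (h : bv m13 m23 m33 3 x ∈ U) : U = ⊤ := by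
  have hn : 0 < qn q (m13 - m23 + 1) := qn_pos hq hq1 (by omega)
  have := hU R.E23 (by simp) _ (sector_mem hq hq1 hU hx h (m23 - 1))
  -- At `m11 = m23 - 1` the component of `E23 v(3, m11)` in `V_2` vanishes.
  rw [R.hE23₃ _ (inR_three.2 ⟨le_rfl, by omega⟩),
    bv_of_not_inR (k := 2) (fun h => by have := (inR_two.1 h).1; omega), smul_zero,
    sub_zero] at this
  refine eq_top_of_one hq hq1 hm hb hU (x := m23 - 1) (inR_one.2 ⟨le_rfl, by omega⟩)
    (mem_of_ofReal_smul_mem (mul_ne_zero ?_ (qn_ne_zero hq hq1 ha)) this)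
  exact (mul_pos (inv_pos.2 hq)
    (Real.sqrt_pos.2 (div_pos (qn_pos hq hq1 (by omega)) hn))).ne'

/-- A vector of the two-dimensional weight space spanned by `v(1, x)` and `v(2, x)` with nonzero
`V_1`-component is raised by `E12` to a nonzero multiple of `v(1, m13)`, because `V_2` has no
vector with `m11 = m13`. -/
lemma one_mem_of_combination (hq : 0 < q) (hq1 : q ≠ 1) (hU : Invariant q m13 m23 m33 R U)
    (d : ℕ) : ∀ (x : ℤ) (a b : ℂ), a ≠ 0 → m23 - 1 ≤ x → x + d = m13 →
      a • bv m13 m23 m33 1 x + b • bv m13 m23 m33 2 x ∈ U → bv m13 m23 m33 1 m13 ∈ U := by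
  induction d with
  | zero =>
    intro x a b ha hx hd h
    obtain rfl : x = m13 := by simpa using hd
    rw [bv_of_not_inR (k := 2) (fun h => by have := (inR_two.1 h).2; omega), smul_zero,
      add_zero] at h
    exact (Submodule.smul_mem_iff U ha).1 h
  | succ d ih =>
    intro x a b ha hx hd h
    push_cast at hd
    have hx1 : InR m13 m23 m33 1 x := inR_one.2 ⟨hx, by omega⟩
    have hx1' : InR m13 m23 m33 1 (x + 1) := inR_one.2 ⟨by omega, by omega⟩
    obtain ⟨c, hc⟩ : ∃ c : ℂ, R.E12 (bv m13 m23 m33 2 x) = c • bv m13 m23 m33 2 (x + 1) := by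
      by_cases h2 : InR m13 m23 m33 2 x
      · exact ⟨_, R.hE12 2 x h2⟩
      · exact ⟨0, by simp [bv_of_not_inR h2]⟩
    have := hU R.E12 (by simp) _ h
    rw [map_add, map_smul, map_smul, R.hE12 1 x hx1, hc, smul_smul, smul_smul] at this
    exact ih (x + 1) _ _
      (mul_ne_zero ha (Complex.ofReal_ne_zero.2 (E12_coeff_pos hq hq1 hx1 hx1').ne'))
      (by omega) (by omega) this

/-! ### Reduction to weight vectors -/

/-- An element of minimal support among the nonzero elements of `U` is an eigenvector of every
diagonal operator preserving `U`: subtracting the eigenvalue of one basis vector of its support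
shortens the support. -/
lemma eigenvalue_eq_of_minimal {T : Wsp m13 m23 m33 →ₗ[ℂ] Wsp m13 m23 m33} {t : Fin 4 → ℤ → ℂ}
    (hT : ∀ k x, InR m13 m23 m33 k x → T (bv m13 m23 m33 k x) = t k x • bv m13 m23 m33 k x)
    (hTU : ∀ u ∈ U, T u ∈ U) {u : Wsp m13 m23 m33} (hu : u ∈ U)
    (hmin : ∀ v ∈ U, v ≠ 0 → u.support.card ≤ v.support.card)
    {i j : Idx m13 m23 m33} (hi : u i ≠ 0) (hj : u j ≠ 0) :
    t i.1.1 i.1.2 = t j.1.1 j.1.2 := by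
  set v := T u - t j.1.1 j.1.2 • u with hv
  have hvi : ∀ l, v l = (t l.1.1 l.1.2 - t j.1.1 j.1.2) * u l := by
    intro l
    simp [hv, diag_apply hT, sub_mul]
  have hv0 : v = 0 := by
    by_contra hne
    refine (hmin v (sub_mem (hTU u hu) (Submodule.smul_mem _ _ hu)) hne).not_gt
      (Finset.card_lt_card ((Finset.ssubset_iff_of_subset ?_).2 ⟨j, ?_, ?_⟩))
    · intro l hl
      rw [Finsupp.mem_support_iff, hvi] at hl
      exact Finsupp.mem_support_iff.2 (right_ne_zero_of_mul hl)
    · simpa using hj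
    · simp [hvi]
  have := hvi i
  rw [hv0, Finsupp.zero_apply, eq_comm, mul_eq_zero] at this
  exact sub_eq_zero.1 (this.resolve_right hi)

lemma exists_weight_vector (hU : Invariant q m13 m23 m33 R U) (hne : U ≠ ⊥) :
    ∃ u ∈ U, u ≠ 0 ∧ ∀ i j : Idx m13 m23 m33, u i ≠ 0 → u j ≠ 0 →
      i.1.2 = j.1.2 ∧ M32 m13 m23 m33 i.1.1 = M32 m13 m23 m33 j.1.1 := by
  obtain ⟨w, hw, hw0⟩ := Submodule.exists_mem_ne_zero_of_ne_bot hne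
  obtain ⟨u, ⟨hu, hu0⟩, hmin⟩ := exists_minimalFor_of_wellFoundedLT
    (fun v : Wsp m13 m23 m33 => v ∈ U ∧ v ≠ 0) (fun v => v.support.card) ⟨w, hw, hw0⟩
  have hmin' : ∀ v ∈ U, v ≠ 0 → u.support.card ≤ v.support.card := fun v hv hv0 =>
    (le_total u.support.card v.support.card).elim id (fun h => hmin ⟨hv, hv0⟩ h)
  refine ⟨u, hu, hu0, fun i j hi hj => ⟨?_, ?_⟩⟩
  · have := eigenvalue_eq_of_minimal (t := fun _ x => (x : ℂ)) R.hE11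
      (hU R.E11 (by simp)) hu hmin' hi hj
    exact_mod_cast this
  · have := eigenvalue_eq_of_minimal (t := fun k _ => ((M32 m13 m23 m33 k : ℤ) : ℂ)) R.hE33
      (hU R.E33 (by simp)) hu hmin' hi hj
    exact_mod_cast this

lemma eq_of_M32_eq {k l : Fin 4} (h : M32 m13 m23 m33 k = M32 m13 m23 m33 l)
    (hk : k ≠ 1) (hl : l ≠ 1) : k = l := by
  fin_cases k <;> fin_cases l <;> simp_all [M32, trip]

lemma eq_one_or_two_of_M32_eq {k : Fin 4} (h : M32 m13 m23 m33 k = M32 m13 m23 m33 1) :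
    k = 1 ∨ k = 2 := by
  fin_cases k <;> simp_all [M32, trip]

lemma eq_top_of_ne_bot (hq : 0 < q) (hq1 : q ≠ 1) (hm : m23 ≤ m13) (ha : m13 + m33 + 1 ≠ 0)
    (hb : m23 + m33 ≠ 0) (hU : Invariant q m13 m23 m33 R U) (hne : U ≠ ⊥) : U = ⊤ := by
  obtain ⟨u, hu, hu0, hw⟩ := exists_weight_vector hU hne
  by_cases h1 : ∃ i : Idx m13 m23 m33, u i ≠ 0 ∧ i.1.1 = 1
  · obtain ⟨⟨⟨k, x⟩, hx⟩, hi, rfl : k = 1⟩ := h1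
    have hux : u = u ⟨(1, x), hx⟩ • bv m13 m23 m33 1 x +
        (if h : InR m13 m23 m33 2 x then u ⟨(2, x), h⟩ else 0) • bv m13 m23 m33 2 x := by
      ext ⟨⟨l, y⟩, hy⟩
      by_cases hl : u ⟨(l, y), hy⟩ = 0
      · rw [hl, bv_of_inR hx]
        by_cases e1 : (l, y) = (1, x)
        · obtain ⟨rfl, rfl⟩ := Prod.mk.inj e1
          exact absurd hl hi
        · by_cases h2 : InR m13 m23 m33 2 x
          · by_cases e2 : (l, y) = (2, x)
            · obtain ⟨rfl, rfl⟩ := Prod.mk.inj e2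
              simp [h2, hl]
            · rw [dif_pos h2]
              simp [bv_of_inR h2, Ne.symm e1, Ne.symm e2]
          · simp [h2, Ne.symm e1]
      · obtain ⟨e, e'⟩ := hw _ _ hl hi
        obtain rfl : y = x := e
        rcases eq_one_or_two_of_M32_eq e' with h | h
        · obtain rfl : l = 1 := h
          rw [bv_of_inR hx]
          by_cases h2 : InR m13 m23 m33 2 y
          · rw [dif_pos h2]
            simp [bv_of_inR h2]
          · simp [h2]
        · obtain rfl : l = 2 := h
          simp [bv_of_inR hx, bv_of_inR hy, show InR m13 m23 m33 2 y from hy]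
    rw [hux] at hu
    have hx' := inR_one.1 hx
    exact eq_top_of_one hq hq1 hm hb hU (x := m13) (inR_one.2 ⟨by omega, le_rfl⟩)
      (one_mem_of_combination hq hq1 hU (m13 - x).toNat x _ _ hi hx'.1 (by omega) hu)
  · push Not at h1
    obtain ⟨⟨⟨k, x⟩, hx⟩, hi⟩ := Finsupp.ne_iff.1 hu0
    rw [Finsupp.zero_apply] at hi
    have hux : u = u ⟨(k, x), hx⟩ • bv m13 m23 m33 k x := by
      ext ⟨⟨l, y⟩, hy⟩
      by_cases hl : u ⟨(l, y), hy⟩ = 0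
      · by_cases e : (l, y) = (k, x)
        · obtain ⟨rfl, rfl⟩ := Prod.mk.inj e
          exact absurd hl hi
        · simp [hl, bv_of_inR hx, Ne.symm e]
      · obtain ⟨e, e'⟩ := hw _ _ hl hi
        obtain rfl : y = x := e
        obtain rfl : l = k := eq_of_M32_eq e' (h1 _ hl) (h1 _ hi)
        simp [bv_of_inR hx]
    rw [hux, Submodule.smul_mem_iff U hi] at hu
    have hk : k ≠ 1 := h1 _ hi
    fin_cases k
    · exact eq_top_of_zero hq hq1 hm hU hx hu
    · exact absurd rfl hk
    · exact eq_top_of_two hq hq1 hm ha hU hx hu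
    · exact eq_top_of_three hq hq1 hm ha hb hU hx hu

end Module

/-- The representation `W` is irreducible — the only invariant
subspaces of `W` are `{0}` and `W` — if and only if `m13 + m33 + 1 ≠ 0` and
`m23 + m33 ≠ 0` (the typicality condition for `U_q[gl(2/1)]`). -/
theorem stmt_11 (q : ℝ) (hq : 0 < q) (hq1 : q ≠ 1)
    (m13 m23 m33 : ℤ) (hm : m23 ≤ m13) (R : GZ q m13 m23 m33) :
    (∀ U : Submodule ℂ (Wsp m13 m23 m33), Invariant q m13 m23 m33 R U →
      U = ⊥ ∨ U = ⊤) ↔ (m13 + m33 + 1 ≠ 0 ∧ m23 + m33 ≠ 0) := by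
  constructor
  · intro h
    refine ⟨fun ha => ?_, fun hb => ?_⟩
    · rcases h _ (invariant_of_first R ha) with e | e
      exacts [sectors_ne_bot hm (by simp) e, sectors_ne_top hm (by simp) e]
    · rcases h _ (invariant_of_second R hb) with e | e
      exacts [sectors_ne_bot hm (by simp) e, sectors_ne_top hm (by simp) e]
  · rintro ⟨ha, hb⟩ U hU
    exact or_iff_not_imp_left.2 (eq_top_of_ne_bot hq hq1 hm ha hb hU)
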